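/- For every full rLTL formula φ over a nonempty finite set 𝒫 of atomic propositions there exists a generalized Büchi automaton A over the alphabet Σ = 2^𝒫 (without a designated initial state) together with a family of states (q_b)_{b ∈ B₄} such that: (i) the number of states of A is at most 5^{|cl(φ)|} + 4; (ii) A has at most 4·|cl(φ)| acceptance sets; and (iii) for every b ∈ B₄ and every infinite word σ ∈ Σ^ω, A has an accepting run on σ starting in q_b if and only if V(σ,φ) = b. -/

import Mathlib

/-- Truth values as 4-tuples of Booleans. -/
abbrev TV := Bool × Bool × Bool × Bool

def ttop : TV := (true, true, true, true)
def tbot : TV := (false, false, false, false)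

/-- Componentwise order on 4-tuples. -/
def tle (a b : TV) : Prop :=
  a.1 ≤ b.1 ∧ a.2.1 ≤ b.2.1 ∧ a.2.2.1 ≤ b.2.2.1 ∧ a.2.2.2 ≤ b.2.2.2

instance : DecidableRel tle := fun a b =>
  decidable_of_iff (a.1 ≤ b.1 ∧ a.2.1 ≤ b.2.1 ∧ a.2.2.1 ≤ b.2.2.1 ∧ a.2.2.2 ≤ b.2.2.2) Iff.rfl

def tmeet (a b : TV) : TV :=
  (a.1 && b.1, a.2.1 && b.2.1, a.2.2.1 && b.2.2.1, a.2.2.2 && b.2.2.2)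

def tjoin (a b : TV) : TV :=
  (a.1 || b.1, a.2.1 || b.2.1, a.2.2.1 || b.2.2.1, a.2.2.2 || b.2.2.2)

/-- da Costa negation. -/
def tneg (a : TV) : TV := if a = ttop then tbot else ttop

/-- Residual implication. -/
def timp (a b : TV) : TV := if tle a b then ttop else b

/-- Infimum of a Boolean sequence. -/
noncomputable def bInf (f : ℕ → Bool) : Bool :=
  @decide (∀ i, f i = true) (Classical.propDecidable _)

/-- Supremum of a Boolean sequence. -/
noncomputable def bSup (f : ℕ → Bool) : Bool :=
  @decide (∃ i, f i = true) (Classical.propDecidable _)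

/-- Bounded infimum over `i < n`. -/
noncomputable def bInfLt (n : ℕ) (f : ℕ → Bool) : Bool :=
  @decide (∀ i, i < n → f i = true) (Classical.propDecidable _)

/-- Bounded supremum over `i < n`. -/
noncomputable def bSupLt (n : ℕ) (f : ℕ → Bool) : Bool :=
  @decide (∃ i, i < n ∧ f i = true) (Classical.propDecidable _)

/-- Suffix of an infinite word. -/
def suffix {P : Type} (σ : ℕ → Set P) (i : ℕ) : ℕ → Set P := fun j => σ (i + j)


/-- Full rLTL formulas. -/
inductive RFormula (P : Type) : Type where
  | atom : P → RFormula P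
  | not : RFormula P → RFormula P
  | and : RFormula P → RFormula P → RFormula P
  | or : RFormula P → RFormula P → RFormula P
  | imp : RFormula P → RFormula P → RFormula P
  | next : RFormula P → RFormula P
  | always : RFormula P → RFormula P
  | eventually : RFormula P → RFormula P
  | release : RFormula P → RFormula P → RFormula P
  | until : RFormula P → RFormula P → RFormula P
  deriving DecidableEq

open scoped Classical in
/-- The 5-valued semantics of full rLTL. -/
noncomputable def rV {P : Type} : RFormula P → (ℕ → Set P) → TV
  | .atom p, σ => if p ∈ σ 0 then ttop else tbot
  | .not φ, σ => tneg (rV φ σ)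
  | .and φ ψ, σ => tmeet (rV φ σ) (rV ψ σ)
  | .or φ ψ, σ => tjoin (rV φ σ) (rV ψ σ)
  | .imp φ ψ, σ => timp (rV φ σ) (rV ψ σ)
  | .next φ, σ => rV φ (suffix σ 1)
  | .always φ, σ =>
      (bInf fun i => (rV φ (suffix σ i)).1,
       bSup fun j => bInf fun i => (rV φ (suffix σ (j + i))).2.1,
       bInf fun j => bSup fun i => (rV φ (suffix σ (j + i))).2.2.1,
       bSup fun i => (rV φ (suffix σ i)).2.2.2)
  | .eventually φ, σ =>
      (bSup fun i => (rV φ (suffix σ i)).1,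
       bSup fun i => (rV φ (suffix σ i)).2.1,
       bSup fun i => (rV φ (suffix σ i)).2.2.1,
       bSup fun i => (rV φ (suffix σ i)).2.2.2)
  | .release φ ψ, σ =>
      (bInf fun j => ((rV ψ (suffix σ j)).1 || bSupLt j fun i => (rV φ (suffix σ i)).1),
       bSup fun k => bInf fun j =>
         ((rV ψ (suffix σ (k + j))).2.1 || bSupLt (k + j) fun i => (rV φ (suffix σ i)).2.1),
       bInf fun k => bSup fun j =>
         ((rV ψ (suffix σ (k + j))).2.2.1 || bSupLt (k + j) fun i => (rV φ (suffix σ i)).2.2.1),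
       bSup fun j => ((rV ψ (suffix σ j)).2.2.2 || bSupLt j fun i => (rV φ (suffix σ i)).2.2.2))
  | .until φ ψ, σ =>
      (bSup fun j => ((rV ψ (suffix σ j)).1 && bInfLt j fun i => (rV φ (suffix σ i)).1),
       bSup fun j => ((rV ψ (suffix σ j)).2.1 && bInfLt j fun i => (rV φ (suffix σ i)).2.1),
       bSup fun j => ((rV ψ (suffix σ j)).2.2.1 && bInfLt j fun i => (rV φ (suffix σ i)).2.2.1),
       bSup fun j => ((rV ψ (suffix σ j)).2.2.2 && bInfLt j fun i => (rV φ (suffix σ i)).2.2.2))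

/-- Projection onto the k-th component. -/
def comp : Fin 4 → TV → Bool
  | 0, a => a.1
  | 1, a => a.2.1
  | 2, a => a.2.2.1
  | 3, a => a.2.2.2

/-- The closure (set of subformulas) of a full rLTL formula. -/
def cl {P : Type} [DecidableEq P] : RFormula P → Finset (RFormula P)
  | .atom p => {.atom p}
  | .not φ => insert (.not φ) (cl φ)
  | .and φ ψ => insert (.and φ ψ) (cl φ ∪ cl ψ)
  | .or φ ψ => insert (.or φ ψ) (cl φ ∪ cl ψ)
  | .imp φ ψ => insert (.imp φ ψ) (cl φ ∪ cl ψ)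
  | .next φ => insert (.next φ) (cl φ)
  | .always φ => insert (.always φ) (cl φ)
  | .eventually φ => insert (.eventually φ) (cl φ)
  | .release φ ψ => insert (.release φ ψ) (cl φ ∪ cl ψ)
  | .until φ ψ => insert (.until φ ψ) (cl φ ∪ cl ψ)

/-- A generalized Büchi automaton (without designated initial state) over alphabet `S`
with state space `Q`: a transition relation and a finite set of acceptance sets. -/
structure GBA (S : Type) (Q : Type) where
  Δ : Q → S → Q → Prop
  Acc : Finset (Set Q)

/-- `A` has an accepting run on `σ` starting in state `q`: there is a run starting in `q`,
following the transition relation, that visits every acceptance set infinitely often. -/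
def AcceptsFrom {S Q : Type} (A : GBA S Q) (q : Q) (σ : ℕ → S) : Prop :=
  ∃ ρ : ℕ → Q, ρ 0 = q ∧ (∀ i, A.Δ (ρ i) (σ i) (ρ (i + 1)))
    ∧ ∀ F ∈ A.Acc, ∀ i : ℕ, ∃ j, i ≤ j ∧ ρ j ∈ F

/-- The 4-tuples belonging to B₄ (monotone tuples). -/
def TVMono (a : TV) : Prop := a.1 ≤ a.2.1 ∧ a.2.1 ≤ a.2.2.1 ∧ a.2.2.1 ≤ a.2.2.2

/-!
The states of the automaton are the classes of infinite words that agree on the values of all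
subformulas, and a transition reads the first letter of a word and leads to the class of its tail.
Along a run the values therefore obey the expansion laws of the temporal operators. These laws alone
do not determine the values, but the Büchi conditions exclude that an obligation is postponed
forever and leave only one solution. Since the suffixes of the input word provide a solution, every
accepting run carries their values.

The second and third components of a robust release say that something holds eventually always and
infinitely often, which takes two further bits to verify by Büchi conditions. They need no
additional states: the four components and the two bits form a chain of six bits, the third
component of the right operand settles either the two upper or the two lower of them, and the
remaining four bits are again a truth value of rLTL. There are five initial states besides the
classes, but an atomic proposition never has the value `0001`, so that at least one of the
`5 ^ |cl φ|` conceivable classes is empty.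
-/

/-- The automaton with its states renamed along a bijection. -/
noncomputable def GBA.map {S Q Q' : Type} (A : GBA S Q) (e : Q ≃ Q') : GBA S Q' where
  Δ q a q' := A.Δ (e.symm q) a (e.symm q')
  Acc := A.Acc.map (Equiv.Set.congr e).toEmbedding

theorem GBA.acceptsFrom_map {S Q Q' : Type} (A : GBA S Q) (e : Q ≃ Q') (q : Q) (σ : ℕ → S) :
    AcceptsFrom (A.map e) (e q) σ ↔ AcceptsFrom A q σ := by
  constructor
  · rintro ⟨ρ, h0, hΔ, hacc⟩
    refine ⟨fun i => e.symm (ρ i), by simp [h0], hΔ, fun F hF i => ?_⟩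
    obtain ⟨j, hij, x, hx, hxj⟩ := hacc (e '' F) (Finset.mem_map_of_mem _ hF) i
    exact ⟨j, hij, by simpa [← hxj] using hx⟩
  · rintro ⟨ρ, h0, hΔ, hacc⟩
    refine ⟨fun i => e (ρ i), by simp [h0], fun i => by simpa [GBA.map] using hΔ i, ?_⟩
    intro F hF i
    obtain ⟨G, hG, rfl⟩ := Finset.mem_map.1 hF
    obtain ⟨j, hij, hj⟩ := hacc G hG i
    exact ⟨j, hij, Set.mem_image_of_mem e hj⟩

namespace RLTL

open Filter

/-! ### Fair solutions of temporal recurrences -/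

section Recurrences

variable {x y r s low high : ℕ → Prop}

theorem until_imp_of_frequently (hr : ∀ i, r i → y i ∨ x i ∧ r (i + 1))
    (hs : ∀ i, y i ∨ x i ∧ s (i + 1) → s i) (hf : ∃ᶠ j in atTop, r j → y j) (i : ℕ) :
    r i → s i := by
  intro hri
  by_contra hsi
  have hrs : ∀ j ≥ i, r j ∧ ¬ s j := Nat.le_induction ⟨hri, hsi⟩ fun j _ hj => by
    have := hr j
    have := hs j
    tauto
  obtain ⟨j, hij, hj⟩ := frequently_atTop.1 hf i
  exact (hrs j hij).2 (hs j (.inl (hj (hrs j hij).1)))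

theorem release_imp_of_frequently (hr : ∀ i, r i → y i ∧ (x i ∨ r (i + 1)))
    (hs : ∀ i, y i ∧ (x i ∨ s (i + 1)) → s i) (hf : ∃ᶠ j in atTop, y j → s j) (i : ℕ) :
    r i → s i := by
  refine not_imp_not.1 (until_imp_of_frequently (x := fun j => ¬ x j) (y := fun j => ¬ y j)
    (r := fun j => ¬ s j) (s := fun j => ¬ r j) (fun j => ?_) (fun j => ?_)
    (hf.mono fun j => mt) i)
  · have := hs j
    tauto
  · have := hr j
    tauto

theorem forall_ge_of_imp_or_succ (hr : ∀ i, r i → x i ∨ r (i + 1))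
    (hs : ∀ i, x i ∨ s (i + 1) → s i) {i : ℕ} (hri : r i) (hsi : ¬ s i) :
    ∀ j ≥ i, r j ∧ ¬ s j ∧ ¬ x j := by
  have hx : ∀ {j}, ¬ s j → ¬ x j := fun {j} hj hxj => hj (hs j (.inl hxj))
  refine Nat.le_induction ⟨hri, hsi, hx hsi⟩ fun j _ ⟨hrj, hsj, hxj⟩ => ?_
  have hsj' : ¬ s (j + 1) := fun h => hsj (hs j (.inr h))
  exact ⟨(hr j hrj).resolve_left hxj, hsj', hx hsj'⟩

theorem releaseEvAlways_imp_of_frequently (hr : ∀ i, r i → x i ∨ r (i + 1))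
    (hs : ∀ i, x i ∨ s (i + 1) → s i) (hlow : ∀ i, low i → y i ∧ (x i ∨ low (i + 1)))
    (hfr : ∃ᶠ j in atTop, r j → x j ∨ low j) (hfs : ∃ᶠ j in atTop, y j → s j) (i : ℕ) :
    r i → s i := by
  intro hri
  by_contra hsi
  have hrs := forall_ge_of_imp_or_succ hr hs hri hsi
  obtain ⟨k, hik, hk⟩ := frequently_atTop.1 hfr i
  have hlowk : low k := (hk (hrs k hik).1).resolve_left (hrs k hik).2.2
  have hlowj : ∀ j ≥ k, low j := Nat.le_induction hlowk fun j hkj hj =>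
    (hlow j hj).2.resolve_left (hrs j (hik.trans hkj)).2.2
  obtain ⟨j, hkj, hj⟩ := frequently_atTop.1 hfs k
  exact (hrs j (hik.trans hkj)).2.1 (hj (hlow j (hlowj j hkj)).1)

theorem releaseInfOften_imp_of_frequently (hr : ∀ i, r i → x i ∨ r (i + 1))
    (hs : ∀ i, x i ∨ s (i + 1) → s i) (hhigh : ∀ i, y i ∨ high (i + 1) → high i)
    (hfr : ∃ᶠ j in atTop, r j → x j ∨ y j) (hfs : ∃ᶠ j in atTop, high j → s j) (i : ℕ) :
    r i → s i := by
  intro hri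
  by_contra hsi
  have hrs := forall_ge_of_imp_or_succ hr hs hri hsi
  obtain ⟨k, hik, hk⟩ := frequently_atTop.1 hfs i
  have hhighk : ¬ high k := fun h => (hrs k hik).2.1 (hk h)
  have hhighj : ∀ j ≥ k, ¬ high j := Nat.le_induction hhighk fun j _ hj h => hj (hhigh j (.inr h))
  obtain ⟨j, hkj, hj⟩ := frequently_atTop.1 hfr k
  obtain ⟨hrj, -, hxj⟩ := hrs j (hik.trans hkj)
  exact hhighj j hkj (hhigh j (.inl ((hj hrj).resolve_left hxj)))

end Recurrences

/-! ### Temporal operators on words -/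

theorem bInf_eq_true {f : ℕ → Bool} : bInf f = true ↔ ∀ i, f i = true := by
  simp [bInf]

theorem bSup_eq_true {f : ℕ → Bool} : bSup f = true ↔ ∃ i, f i = true := by
  simp [bSup]

theorem bInfLt_eq_true {n : ℕ} {f : ℕ → Bool} :
    bInfLt n f = true ↔ ∀ i < n, f i = true := by
  simp [bInfLt]

theorem bSupLt_eq_true {n : ℕ} {f : ℕ → Bool} :
    bSupLt n f = true ↔ ∃ i < n, f i = true := by
  simp [bSupLt]

/-- Infinite words over the alphabet of sets of atomic propositions. -/
abbrev Word (P : Type) : Type := ℕ → Set P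

variable {P : Type}

section Words

theorem suffix_zero (σ : Word P) : suffix σ 0 = σ := by
  funext k
  simp [suffix]

theorem suffix_suffix (σ : Word P) (i j : ℕ) : suffix (suffix σ i) j = suffix σ (i + j) := by
  funext k
  simp [suffix, Nat.add_assoc]

theorem suffix_one_suffix (σ : Word P) (i : ℕ) : suffix (suffix σ 1) i = suffix σ (i + 1) := by
  rw [suffix_suffix, Nat.add_comm]

/-- `x` until `y`: the operator used in every component of the robust until. -/
noncomputable def untilBool (x y : Word P → Bool) (σ : Word P) : Bool :=
  bSup fun j => y (suffix σ j) && bInfLt j fun i => x (suffix σ i)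

/-- First component of the robust release: `y` holds always, until released by `x`. -/
noncomputable def releaseAlways (x y : Word P → Bool) (σ : Word P) : Bool :=
  bInf fun j => y (suffix σ j) || bSupLt j fun i => x (suffix σ i)

/-- Second component of the robust release: `y` holds eventually always, until released. -/
noncomputable def releaseEvAlways (x y : Word P → Bool) (σ : Word P) : Bool :=
  bSup fun k => bInf fun j => y (suffix σ (k + j)) || bSupLt (k + j) fun i => x (suffix σ i)

/-- Third component of the robust release: `y` holds infinitely often, until released. -/
noncomputable def releaseInfOften (x y : Word P → Bool) (σ : Word P) : Bool :=
  bInf fun k => bSup fun j => y (suffix σ (k + j)) || bSupLt (k + j) fun i => x (suffix σ i)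

/-- Fourth component of the robust release: `y` holds at least once, unless released. -/
noncomputable def releaseOnce (x y : Word P → Bool) (σ : Word P) : Bool :=
  bSup fun j => y (suffix σ j) || bSupLt j fun i => x (suffix σ i)

variable {x y x' y' : Word P → Bool} {σ : Word P}

theorem untilBool_iff : untilBool x y σ ↔ ∃ j, y (suffix σ j) ∧ ∀ i < j, x (suffix σ i) := by
  simp [untilBool, bSup_eq_true, bInfLt_eq_true]

theorem releaseAlways_iff :
    releaseAlways x y σ ↔ ∀ j, y (suffix σ j) ∨ ∃ i < j, x (suffix σ i) := by
  simp [releaseAlways, bInf_eq_true, bSupLt_eq_true]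

theorem releaseEvAlways_iff :
    releaseEvAlways x y σ ↔ (∃ i, x (suffix σ i)) ∨ ∀ᶠ j in atTop, y (suffix σ j) := by
  simp only [releaseEvAlways, bSup_eq_true, bInf_eq_true, bSupLt_eq_true, Bool.or_eq_true]
  constructor
  · rintro ⟨k, hk⟩
    by_cases hx : ∃ i, x (suffix σ i)
    · exact .inl hx
    · refine .inr (eventually_atTop.2 ⟨k, fun j hkj => ?_⟩)
      obtain ⟨m, rfl⟩ := Nat.exists_eq_add_of_le hkj
      exact (hk m).resolve_right fun ⟨i, _, hi⟩ => hx ⟨i, hi⟩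
  · rintro (⟨i, hi⟩ | hy)
    · exact ⟨i + 1, fun j => .inr ⟨i, by omega, hi⟩⟩
    · obtain ⟨k, hk⟩ := eventually_atTop.1 hy
      exact ⟨k, fun j => .inl (hk _ (by omega))⟩

theorem releaseInfOften_iff :
    releaseInfOften x y σ ↔ (∃ i, x (suffix σ i)) ∨ ∃ᶠ j in atTop, y (suffix σ j) := by
  simp only [releaseInfOften, bSup_eq_true, bInf_eq_true, bSupLt_eq_true, Bool.or_eq_true]
  constructor
  · intro h
    by_cases hx : ∃ i, x (suffix σ i)
    · exact .inl hx
    · refine .inr (frequently_atTop.2 fun k => ?_)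
      obtain ⟨j, hj⟩ := h k
      exact ⟨k + j, by omega, hj.resolve_right fun ⟨i, _, hi⟩ => hx ⟨i, hi⟩⟩
  · rintro (⟨i, hi⟩ | hy) k
    · exact ⟨i + 1, .inr ⟨i, by omega, hi⟩⟩
    · obtain ⟨j, hkj, hj⟩ := frequently_atTop.1 hy k
      obtain ⟨m, rfl⟩ := Nat.exists_eq_add_of_le hkj
      exact ⟨m, .inl hj⟩

theorem releaseOnce_iff :
    releaseOnce x y σ ↔ ∃ j, y (suffix σ j) ∨ x (suffix σ j) := by
  simp only [releaseOnce, bSup_eq_true, bSupLt_eq_true, Bool.or_eq_true]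
  constructor
  · rintro ⟨j, hj | ⟨i, -, hi⟩⟩
    exacts [⟨j, .inl hj⟩, ⟨i, .inr hi⟩]
  · rintro ⟨j, hj | hj⟩
    exacts [⟨j, .inl hj⟩, ⟨j + 1, .inr ⟨j, by omega, hj⟩⟩]

theorem exists_suffix_iff {p : Word P → Prop} :
    (∃ i, p (suffix σ i)) ↔ p σ ∨ ∃ i, p (suffix (suffix σ 1) i) := by
  rw [← Nat.or_exists_add_one]
  simp only [suffix_zero, suffix_one_suffix]

theorem eventually_suffix_suffix {p : Word P → Prop} (n : ℕ) :
    (∀ᶠ j in atTop, p (suffix (suffix σ n) j)) ↔ ∀ᶠ j in atTop, p (suffix σ j) := by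
  simp only [suffix_suffix, Nat.add_comm n]
  rw [← eventually_map (m := (· + n)) (P := fun j => p (suffix σ j)), map_add_atTop_eq_nat]

theorem frequently_suffix_suffix {p : Word P → Prop} (n : ℕ) :
    (∃ᶠ j in atTop, p (suffix (suffix σ n) j)) ↔ ∃ᶠ j in atTop, p (suffix σ j) :=
  not_congr (eventually_suffix_suffix (p := fun τ => ¬ p τ) n)

theorem untilBool_step (x y : Word P → Bool) (σ : Word P) :
    untilBool x y σ ↔ y σ ∨ x σ ∧ untilBool x y (suffix σ 1) := by
  simp only [untilBool_iff]
  rw [← Nat.or_exists_add_one]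
  simp only [Nat.forall_lt_succ_left, suffix_zero, suffix_one_suffix, Nat.not_lt_zero,
    false_imp_iff, implies_true, and_true, ← exists_and_left, and_left_comm]

theorem releaseAlways_step (x y : Word P → Bool) (σ : Word P) :
    releaseAlways x y σ ↔ y σ ∧ (x σ ∨ releaseAlways x y (suffix σ 1)) := by
  simp only [releaseAlways_iff]
  rw [← Nat.and_forall_add_one]
  simp only [Nat.exists_lt_succ_left, suffix_zero, suffix_one_suffix, Nat.not_lt_zero, false_and,
    exists_false, or_false, ← forall_or_left, or_left_comm]

theorem releaseEvAlways_step (x y : Word P → Bool) (σ : Word P) :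
    releaseEvAlways x y σ ↔ x σ ∨ releaseEvAlways x y (suffix σ 1) := by
  rw [releaseEvAlways_iff, releaseEvAlways_iff, exists_suffix_iff (p := (x · = true)),
    eventually_suffix_suffix (p := (y · = true)), or_assoc]

theorem releaseInfOften_step (x y : Word P → Bool) (σ : Word P) :
    releaseInfOften x y σ ↔ x σ ∨ releaseInfOften x y (suffix σ 1) := by
  rw [releaseInfOften_iff, releaseInfOften_iff, exists_suffix_iff (p := (x · = true)),
    frequently_suffix_suffix (p := (y · = true)), or_assoc]

theorem releaseOnce_step (x y : Word P → Bool) (σ : Word P) :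
    releaseOnce x y σ ↔ (y σ ∨ x σ) ∨ releaseOnce x y (suffix σ 1) := by
  rw [releaseOnce_iff, releaseOnce_iff, exists_suffix_iff (p := fun τ => y τ ∨ x τ)]

theorem releaseAlways_le_releaseEvAlways (x y : Word P → Bool) (σ : Word P) :
    releaseAlways x y σ ≤ releaseEvAlways x y σ := by
  refine Bool.le_iff_imp.2 fun h => ?_
  rw [releaseAlways_iff] at h
  refine releaseEvAlways_iff.2 (or_iff_not_imp_left.2 fun hx => .of_forall fun j => ?_)
  exact (h j).resolve_right fun ⟨i, _, hi⟩ => hx ⟨i, hi⟩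

theorem releaseInfOften_le_releaseOnce (x y : Word P → Bool) (σ : Word P) :
    releaseInfOften x y σ ≤ releaseOnce x y σ := by
  rw [Bool.le_iff_imp, releaseInfOften_iff, releaseOnce_iff]
  rintro (⟨i, hi⟩ | hy)
  exacts [⟨i, .inr hi⟩, hy.exists.imp fun _ => .inl]

theorem untilBool_mono (hx : ∀ τ, x τ ≤ x' τ) (hy : ∀ τ, y τ ≤ y' τ) (σ : Word P) :
    untilBool x y σ ≤ untilBool x' y' σ := by
  simp only [Bool.le_iff_imp, untilBool_iff] at hx hy ⊢
  exact fun ⟨j, hj, hi⟩ => ⟨j, hy _ hj, fun i hij => hx _ (hi i hij)⟩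

theorem releaseAlways_mono (hx : ∀ τ, x τ ≤ x' τ) (hy : ∀ τ, y τ ≤ y' τ) (σ : Word P) :
    releaseAlways x y σ ≤ releaseAlways x' y' σ := by
  simp only [Bool.le_iff_imp, releaseAlways_iff] at hx hy ⊢
  exact fun h j => (h j).imp (hy _) fun ⟨i, hij, hi⟩ => ⟨i, hij, hx _ hi⟩

theorem releaseEvAlways_le_releaseInfOften (hx : ∀ τ, x τ ≤ x' τ) (hy : ∀ τ, y τ ≤ y' τ)
    (σ : Word P) : releaseEvAlways x y σ ≤ releaseInfOften x' y' σ := by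
  simp only [Bool.le_iff_imp, releaseEvAlways_iff, releaseInfOften_iff] at hx hy ⊢
  exact Or.imp (fun ⟨i, hi⟩ => ⟨i, hx _ hi⟩) fun h => (h.mono fun _ => hy _).frequently

theorem releaseOnce_mono (hx : ∀ τ, x τ ≤ x' τ) (hy : ∀ τ, y τ ≤ y' τ) (σ : Word P) :
    releaseOnce x y σ ≤ releaseOnce x' y' σ := by
  simp only [Bool.le_iff_imp, releaseOnce_iff] at hx hy ⊢
  exact fun ⟨j, hj⟩ => ⟨j, hj.imp (hy _) (hx _)⟩

theorem frequently_untilBool_imp (x y : Word P → Bool) (σ : Word P) :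
    ∃ᶠ j in atTop, untilBool x y (suffix σ j) → y (suffix σ j) := by
  by_contra h
  obtain ⟨n, hn⟩ := eventually_atTop.1 (not_frequently.1 h)
  simp only [Classical.not_imp] at hn
  obtain ⟨j, hj, -⟩ := untilBool_iff.1 (hn n le_rfl).1
  rw [suffix_suffix] at hj
  exact (hn (n + j) (by omega)).2 hj

theorem frequently_releaseOnce_imp (x y : Word P → Bool) (σ : Word P) :
    ∃ᶠ j in atTop, releaseOnce x y (suffix σ j) → y (suffix σ j) ∨ x (suffix σ j) := by
  by_contra h
  obtain ⟨n, hn⟩ := eventually_atTop.1 (not_frequently.1 h)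
  simp only [Classical.not_imp] at hn
  obtain ⟨j, hj⟩ := releaseOnce_iff.1 (hn n le_rfl).1
  rw [suffix_suffix] at hj
  exact (hn (n + j) (by omega)).2 hj

theorem eventually_releaseAlways (h : ∀ᶠ j in atTop, y (suffix σ j)) :
    ∀ᶠ j in atTop, releaseAlways x y (suffix σ j) := by
  refine (eventually_forall_ge_atTop.2 h).mono fun j hj => releaseAlways_iff.2 fun i => .inl ?_
  rw [suffix_suffix]
  exact hj _ (by omega)

theorem frequently_imp_releaseAlways (x y : Word P → Bool) (σ : Word P) :
    ∃ᶠ j in atTop, y (suffix σ j) → releaseAlways x y (suffix σ j) := by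
  by_cases hy : ∀ᶠ j in atTop, y (suffix σ j)
  · exact ((eventually_releaseAlways hy).mono fun j hj (_ : y (suffix σ j)) => hj).frequently
  · exact (not_eventually.1 hy).mono fun _ h h' => absurd h' h

theorem releaseEvAlways_suffix_of_frequently (hx : ∃ᶠ j in atTop, x (suffix σ j)) (n : ℕ) :
    releaseEvAlways x y (suffix σ n) :=
  releaseEvAlways_iff.2 <| .inl <|
    ((frequently_suffix_suffix (p := (x · = true)) n).2 hx).exists

theorem frequently_releaseEvAlways (x y : Word P → Bool) (σ : Word P) :
    ∃ᶠ j in atTop,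
      (releaseEvAlways x y (suffix σ j) → x (suffix σ j) ∨ releaseAlways x y (suffix σ j)) ∧
        (y (suffix σ j) → releaseEvAlways x y (suffix σ j)) := by
  by_cases hy : ∀ᶠ j in atTop, y (suffix σ j)
  · have hE (j : ℕ) : releaseEvAlways x y (suffix σ j) :=
      releaseEvAlways_iff.2 (.inr ((eventually_suffix_suffix (p := (y · = true)) j).2 hy))
    exact ((eventually_releaseAlways hy).mono fun j hj =>
      ⟨fun _ => .inr hj, fun _ => hE j⟩).frequently
  by_cases hx : ∃ᶠ j in atTop, x (suffix σ j)
  · exact hx.mono fun j hj => ⟨fun _ => .inl hj, fun _ => releaseEvAlways_suffix_of_frequently hx j⟩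
  · have hE : ∀ᶠ j in atTop, ¬ releaseEvAlways x y (suffix σ j) := by
      refine (eventually_forall_ge_atTop.2 (not_frequently.1 hx)).mono fun j hj hEj => ?_
      rw [releaseEvAlways_iff, eventually_suffix_suffix (p := (y · = true))] at hEj
      obtain ⟨i, hi⟩ := hEj.resolve_right hy
      rw [suffix_suffix] at hi
      exact hj _ (by omega) hi
    exact ((not_eventually.1 hy).and_eventually hE).mono fun j ⟨hyj, hEj⟩ =>
      ⟨fun h => absurd h hEj, fun h => absurd h hyj⟩

theorem frequently_releaseInfOften (x y : Word P → Bool) (σ : Word P) :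
    ∃ᶠ j in atTop,
      (releaseInfOften x y (suffix σ j) → x (suffix σ j) ∨ y (suffix σ j)) ∧
        (releaseOnce x y (suffix σ j) → releaseInfOften x y (suffix σ j)) := by
  by_cases hxy : ∃ᶠ j in atTop, x (suffix σ j) ∨ y (suffix σ j)
  · have hI (j : ℕ) : releaseInfOften x y (suffix σ j) := by
      rw [← frequently_suffix_suffix (p := fun τ => x τ ∨ y τ) j, frequently_or_distrib] at hxy
      exact releaseInfOften_iff.2 (hxy.imp_left Frequently.exists)
    exact hxy.mono fun j hj => ⟨fun _ => hj, fun _ => hI j⟩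
  · have hO : ∀ᶠ j in atTop, ¬ releaseOnce x y (suffix σ j) := by
      refine (eventually_forall_ge_atTop.2 (not_frequently.1 hxy)).mono fun j hj hOj => ?_
      obtain ⟨i, hi⟩ := releaseOnce_iff.1 hOj
      rw [suffix_suffix] at hi
      exact hj _ (by omega) hi.symm
    refine (hO.mono fun j hj => ⟨fun hI => absurd ?_ hj, fun h => absurd h hj⟩).frequently
    exact Bool.le_iff_imp.1 (releaseInfOften_le_releaseOnce x y _) hI

end Words

/-! ### The robust until and release -/

/-- The truth values of rLTL, that is, the chain `B₄`. -/
abbrev RobustTV : Type := {b : TV // TVMono b}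

instance : DecidablePred TVMono := fun a =>
  inferInstanceAs (Decidable (a.1 ≤ a.2.1 ∧ a.2.1 ≤ a.2.2.1 ∧ a.2.2.1 ≤ a.2.2.2))

theorem card_robustTV : Fintype.card RobustTV = 5 := by
  decide

/-- The `k`-th component of a truth-valued function of words. -/
def component (k : Fin 4) (X : Word P → TV) (σ : Word P) : Bool :=
  comp k (X σ)

/-- The robust until of two truth-valued functions of words. -/
noncomputable def robustUntil (X Y : Word P → TV) (σ : Word P) : TV :=
  (untilBool (component 0 X) (component 0 Y) σ,
   untilBool (component 1 X) (component 1 Y) σ,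
   untilBool (component 2 X) (component 2 Y) σ,
   untilBool (component 3 X) (component 3 Y) σ)

/-- The robust release of two truth-valued functions of words. -/
noncomputable def robustRelease (X Y : Word P → TV) (σ : Word P) : TV :=
  (releaseAlways (component 0 X) (component 0 Y) σ,
   releaseEvAlways (component 1 X) (component 1 Y) σ,
   releaseInfOften (component 2 X) (component 2 Y) σ,
   releaseOnce (component 3 X) (component 3 Y) σ)

theorem rV_until (a b : RFormula P) (σ : Word P) :
    rV (.until a b) σ = robustUntil (rV a) (rV b) σ := rfl

theorem rV_eventually (a : RFormula P) (σ : Word P) :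
    rV (.eventually a) σ = robustUntil (fun _ => ttop) (rV a) σ := by
  simp [rV, robustUntil, untilBool, component, comp, bInfLt, ttop]

theorem rV_release (a b : RFormula P) (σ : Word P) :
    rV (.release a b) σ = robustRelease (rV a) (rV b) σ := rfl

theorem rV_always (a : RFormula P) (σ : Word P) :
    rV (.always a) σ = robustRelease (fun _ => tbot) (rV a) σ := by
  simp [rV, robustRelease, releaseAlways, releaseEvAlways, releaseInfOften, releaseOnce,
    component, comp, bSupLt, tbot]

/-- The value of a robust release together with the two auxiliary bits that make its second and
third components verifiable by Büchi conditions: `low` is the release of the first kind applied to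
the second components of the operands, and `high` that of the fourth kind applied to their third
components. -/
structure ReleaseLabel where
  value : TV
  low : Bool
  high : Bool

/-- The label of a word for the robust release of two truth-valued functions. -/
noncomputable def releaseLabel (X Y : Word P → TV) (σ : Word P) : ReleaseLabel where
  value := robustRelease X Y σ
  low := releaseAlways (component 1 X) (component 1 Y) σ
  high := releaseOnce (component 2 X) (component 2 Y) σ

/-- The six bits of a label form a chain, in which the third component `z` of the right operand
lies between `low` and `high`. -/
structure ReleaseLabel.IsChain (z : Bool) (l : ReleaseLabel) : Prop where
  fst_le_low : l.value.1 ≤ l.low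
  low_le_snd : l.low ≤ l.value.2.1
  snd_le_thd : l.value.2.1 ≤ l.value.2.2.1
  thd_le_high : l.value.2.2.1 ≤ l.high
  high_le_fth : l.high ≤ l.value.2.2.2
  low_le : l.low ≤ z
  le_high : z ≤ l.high

/-- The label packed into a single truth value, given the third component `z` of the right operand:
if `z` holds, then so do the two upper bits of the chain, and otherwise the two lower ones fail. -/
def ReleaseLabel.encode (z : Bool) (l : ReleaseLabel) : TV :=
  if z then (l.value.1, l.low, l.value.2.1, l.value.2.2.1)
  else (l.value.2.1, l.value.2.2.1, l.high, l.value.2.2.2)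

theorem ReleaseLabel.IsChain.tvMono_value {z : Bool} {l : ReleaseLabel} (h : l.IsChain z) :
    TVMono l.value :=
  ⟨h.fst_le_low.trans h.low_le_snd, h.snd_le_thd, h.thd_le_high.trans h.high_le_fth⟩

theorem ReleaseLabel.IsChain.tvMono_encode {z : Bool} {l : ReleaseLabel} (h : l.IsChain z) :
    TVMono (l.encode z) := by
  unfold ReleaseLabel.encode
  split_ifs
  exacts [⟨h.fst_le_low, h.low_le_snd, h.snd_le_thd⟩, ⟨h.snd_le_thd, h.thd_le_high, h.high_le_fth⟩]

theorem ReleaseLabel.IsChain.encode_injOn {z : Bool} :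
    Set.InjOn (ReleaseLabel.encode z) {l | l.IsChain z} := by
  rintro ⟨⟨l1, l2, l3, l4⟩, lg, ld⟩ hl ⟨⟨m1, m2, m3, m4⟩, mg, md⟩ hm h
  obtain ⟨l1g, -, -, -, ld4, lgz, lzd⟩ := hl
  obtain ⟨m1g, -, -, -, md4, mgz, mzd⟩ := hm
  cases z <;>
    simp_all [ReleaseLabel.encode, Bool.le_iff_imp]

theorem isChain_releaseLabel {X Y : Word P → TV} (hX : ∀ τ, TVMono (X τ))
    (hY : ∀ τ, TVMono (Y τ)) (σ : Word P) :
    (releaseLabel X Y σ).IsChain (Y σ).2.2.1 where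
  fst_le_low := releaseAlways_mono (fun τ => (hX τ).1) (fun τ => (hY τ).1) σ
  low_le_snd := releaseAlways_le_releaseEvAlways (component 1 X) (component 1 Y) σ
  snd_le_thd := releaseEvAlways_le_releaseInfOften (fun τ => (hX τ).2.1) (fun τ => (hY τ).2.1) σ
  thd_le_high := releaseInfOften_le_releaseOnce (component 2 X) (component 2 Y) σ
  high_le_fth := releaseOnce_mono (fun τ => (hX τ).2.2) (fun τ => (hY τ).2.2) σ
  low_le := (Bool.le_iff_imp.2 fun h =>
    ((releaseAlways_step (component 1 X) (component 1 Y) σ).1 h).1).trans (hY σ).2.1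
  le_high := Bool.le_iff_imp.2 fun h =>
    (releaseOnce_step (component 2 X) (component 2 Y) σ).2 (.inl (.inl h))

/-- The packed label of a word for the robust release of two truth-valued functions. -/
noncomputable def releaseCode (X Y : Word P → TV) (σ : Word P) : TV :=
  (releaseLabel X Y σ).encode (Y σ).2.2.1

theorem releaseLabel_eq_of_releaseCode_eq {X Y : Word P → TV} (hX : ∀ τ, TVMono (X τ))
    (hY : ∀ τ, TVMono (Y τ)) {σ τ : Word P} (hc : releaseCode X Y σ = releaseCode X Y τ)
    (hστ : Y σ = Y τ) : releaseLabel X Y σ = releaseLabel X Y τ := by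
  unfold releaseCode at hc
  rw [hστ] at hc
  exact ReleaseLabel.IsChain.encode_injOn (hστ ▸ isChain_releaseLabel hX hY σ)
    (isChain_releaseLabel hX hY τ) hc

theorem tvMono_robustUntil {X Y : Word P → TV} (hX : ∀ τ, TVMono (X τ))
    (hY : ∀ τ, TVMono (Y τ)) (σ : Word P) : TVMono (robustUntil X Y σ) :=
  ⟨untilBool_mono (fun τ => (hX τ).1) (fun τ => (hY τ).1) σ,
    untilBool_mono (fun τ => (hX τ).2.1) (fun τ => (hY τ).2.1) σ,
    untilBool_mono (fun τ => (hX τ).2.2) (fun τ => (hY τ).2.2) σ⟩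

/-! ### Local and fairness conditions -/

/-- The Büchi condition for the `k`-th component of a robust until with value `r` and right
operand `y`. -/
def UntilFair (k : Fin 4) (y r : TV) : Prop :=
  comp k r → comp k y

/-- The Büchi condition for the `k`-th component of a robust release with label `l` and operands
`x` and `y`. -/
def ReleaseFair (k : Fin 4) (x y : TV) (l : ReleaseLabel) : Prop :=
  match k with
  | 0 => y.1 → l.value.1
  | 1 => (l.value.2.1 → x.2.1 ∨ l.low) ∧ (y.2.1 → l.value.2.1)
  | 2 => (l.value.2.2.1 → x.2.2.1 ∨ y.2.2.1) ∧ (l.high → l.value.2.2.1)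
  | 3 => l.value.2.2.2 → y.2.2.2 ∨ x.2.2.2

/-- The expansion law of the robust until, relating its values `r` and `s` at two successive
positions. -/
def UntilStep (x y r s : TV) : Prop :=
  ∀ k, comp k r ↔ comp k y ∨ comp k x ∧ comp k s

/-- The expansion laws of the robust release, relating its labels at two successive positions. -/
structure ReleaseStep (x y : TV) (l m : ReleaseLabel) : Prop where
  fst : l.value.1 ↔ y.1 ∧ (x.1 ∨ m.value.1)
  low : l.low ↔ y.2.1 ∧ (x.2.1 ∨ m.low)
  snd : l.value.2.1 ↔ x.2.1 ∨ m.value.2.1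
  thd : l.value.2.2.1 ↔ x.2.2.1 ∨ m.value.2.2.1
  high : l.high ↔ (y.2.2.1 ∨ x.2.2.1) ∨ m.high
  fth : l.value.2.2.2 ↔ (y.2.2.2 ∨ x.2.2.2) ∨ m.value.2.2.2

theorem comp_robustUntil (k : Fin 4) (X Y : Word P → TV) (σ : Word P) :
    comp k (robustUntil X Y σ) = untilBool (component k X) (component k Y) σ := by
  fin_cases k <;> rfl

theorem untilStep_robustUntil (X Y : Word P → TV) (σ : Word P) :
    UntilStep (X σ) (Y σ) (robustUntil X Y σ) (robustUntil X Y (suffix σ 1)) := fun k => by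
  simp only [comp_robustUntil]
  exact untilBool_step (component k X) (component k Y) σ

theorem releaseStep_releaseLabel (X Y : Word P → TV) (σ : Word P) :
    ReleaseStep (X σ) (Y σ) (releaseLabel X Y σ) (releaseLabel X Y (suffix σ 1)) where
  fst := releaseAlways_step (component 0 X) (component 0 Y) σ
  low := releaseAlways_step (component 1 X) (component 1 Y) σ
  snd := releaseEvAlways_step (component 1 X) (component 1 Y) σ
  thd := releaseInfOften_step (component 2 X) (component 2 Y) σ
  high := releaseOnce_step (component 2 X) (component 2 Y) σ
  fth := releaseOnce_step (component 3 X) (component 3 Y) σ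

theorem frequently_untilFair (k : Fin 4) (X Y : Word P → TV) (σ : Word P) :
    ∃ᶠ i in atTop, UntilFair k (Y (suffix σ i)) (robustUntil X Y (suffix σ i)) := by
  simp only [UntilFair, comp_robustUntil]
  exact frequently_untilBool_imp (component k X) (component k Y) σ

theorem frequently_releaseFair (k : Fin 4) (X Y : Word P → TV) (σ : Word P) :
    ∃ᶠ i in atTop,
      ReleaseFair k (X (suffix σ i)) (Y (suffix σ i)) (releaseLabel X Y (suffix σ i)) := by
  match k with
  | 0 => exact frequently_imp_releaseAlways (component 0 X) (component 0 Y) σ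
  | 1 => exact frequently_releaseEvAlways (component 1 X) (component 1 Y) σ
  | 2 => exact frequently_releaseInfOften (component 2 X) (component 2 Y) σ
  | 3 => exact frequently_releaseOnce_imp (component 3 X) (component 3 Y) σ

theorem eq_of_forall_comp_imp {a b : TV} (hab : ∀ k, comp k a → comp k b)
    (hba : ∀ k, comp k b → comp k a) : a = b := by
  have h (k : Fin 4) : comp k a = comp k b := Bool.eq_iff_iff.2 ⟨hab k, hba k⟩
  exact Prod.ext (h 0) (Prod.ext (h 1) (Prod.ext (h 2) (h 3)))

/-- A sequence of values obeying the expansion law of the robust until and meeting its Büchi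
conditions infinitely often. -/
structure IsFairUntil (x y r : ℕ → TV) : Prop where
  step : ∀ i, UntilStep (x i) (y i) (r i) (r (i + 1))
  fair : ∀ k, ∃ᶠ i in atTop, UntilFair k (y i) (r i)

theorem IsFairUntil.comp_imp {x y r s : ℕ → TV} (hr : IsFairUntil x y r)
    (hs : IsFairUntil x y s) (i : ℕ) (k : Fin 4) : comp k (r i) → comp k (s i) :=
  until_imp_of_frequently (x := fun j => comp k (x j)) (y := fun j => comp k (y j))
    (r := fun j => comp k (r j)) (s := fun j => comp k (s j))
    (fun j => (hr.step j k).1) (fun j => (hs.step j k).2) (hr.fair k) i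

theorem IsFairUntil.unique {x y r s : ℕ → TV} (hr : IsFairUntil x y r)
    (hs : IsFairUntil x y s) (i : ℕ) : r i = s i :=
  eq_of_forall_comp_imp (hr.comp_imp hs i) (hs.comp_imp hr i)

/-- A sequence of labels obeying the expansion laws of the robust release and meeting its Büchi
conditions infinitely often. -/
structure IsFairRelease (x y : ℕ → TV) (l : ℕ → ReleaseLabel) : Prop where
  step : ∀ i, ReleaseStep (x i) (y i) (l i) (l (i + 1))
  fair : ∀ k, ∃ᶠ i in atTop, ReleaseFair k (x i) (y i) (l i)

theorem IsFairRelease.comp_imp {x y : ℕ → TV} {l m : ℕ → ReleaseLabel}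
    (hl : IsFairRelease x y l) (hm : IsFairRelease x y m) (i : ℕ) (k : Fin 4) :
    comp k (l i).value → comp k (m i).value := by
  fin_cases k
  · exact release_imp_of_frequently (fun j => (hl.step j).fst.1) (fun j => (hm.step j).fst.2)
      (hm.fair 0) i
  · exact releaseEvAlways_imp_of_frequently (fun j => (hl.step j).snd.1)
      (fun j => (hm.step j).snd.2) (fun j => (hl.step j).low.1)
      ((hl.fair 1).mono fun _ => And.left) ((hm.fair 1).mono fun _ => And.right) i
  · exact releaseInfOften_imp_of_frequently (fun j => (hl.step j).thd.1)
      (fun j => (hm.step j).thd.2)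
      (fun j h => (hm.step j).high.2 (h.imp_left .inl))
      ((hl.fair 2).mono fun _ => And.left) ((hm.fair 2).mono fun _ => And.right) i
  · exact until_imp_of_frequently (x := fun _ => True)
      (fun j h => by simpa using (hl.step j).fth.1 h)
      (fun j h => (hm.step j).fth.2 (by simpa using h)) (hl.fair 3) i

theorem IsFairRelease.value_unique {x y : ℕ → TV} {l m : ℕ → ReleaseLabel}
    (hl : IsFairRelease x y l) (hm : IsFairRelease x y m) (i : ℕ) : (l i).value = (m i).value :=
  eq_of_forall_comp_imp (hl.comp_imp hm i) (hm.comp_imp hl i)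

theorem isFairUntil_robustUntil {X Y : Word P → TV} {τ : ℕ → Word P}
    (hstep : ∀ i, robustUntil X Y (suffix (τ i) 1) = robustUntil X Y (τ (i + 1)))
    (hfair : ∀ k, ∃ᶠ i in atTop, UntilFair k (Y (τ i)) (robustUntil X Y (τ i))) :
    IsFairUntil (fun i => X (τ i)) (fun i => Y (τ i)) (fun i => robustUntil X Y (τ i)) :=
  ⟨fun i => hstep i ▸ untilStep_robustUntil X Y (τ i), hfair⟩

theorem isFairRelease_releaseLabel {X Y : Word P → TV} {τ : ℕ → Word P}
    (hstep : ∀ i, releaseLabel X Y (suffix (τ i) 1) = releaseLabel X Y (τ (i + 1)))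
    (hfair : ∀ k, ∃ᶠ i in atTop, ReleaseFair k (X (τ i)) (Y (τ i)) (releaseLabel X Y (τ i))) :
    IsFairRelease (fun i => X (τ i)) (fun i => Y (τ i)) (fun i => releaseLabel X Y (τ i)) :=
  ⟨fun i => hstep i ▸ releaseStep_releaseLabel X Y (τ i), hfair⟩

/-! ### Monotonicity of the semantics -/

theorem tvMono_ttop : TVMono ttop := by
  decide

theorem tvMono_tbot : TVMono tbot := by
  decide

theorem tvMono_tneg (a : TV) : TVMono (tneg a) := by
  unfold tneg
  split_ifs
  exacts [tvMono_tbot, tvMono_ttop]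

theorem tvMono_timp {b : TV} (a : TV) (hb : TVMono b) : TVMono (timp a b) := by
  unfold timp
  split_ifs
  exacts [tvMono_ttop, hb]

theorem tvMono_tmeet {a b : TV} (ha : TVMono a) (hb : TVMono b) : TVMono (tmeet a b) :=
  ⟨inf_le_inf ha.1 hb.1, inf_le_inf ha.2.1 hb.2.1, inf_le_inf ha.2.2 hb.2.2⟩

theorem tvMono_tjoin {a b : TV} (ha : TVMono a) (hb : TVMono b) : TVMono (tjoin a b) :=
  ⟨sup_le_sup ha.1 hb.1, sup_le_sup ha.2.1 hb.2.1, sup_le_sup ha.2.2 hb.2.2⟩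

theorem tvMono_robustRelease {X Y : Word P → TV} (hX : ∀ τ, TVMono (X τ))
    (hY : ∀ τ, TVMono (Y τ)) (σ : Word P) : TVMono (robustRelease X Y σ) :=
  (isChain_releaseLabel hX hY σ).tvMono_value

theorem rV_atom_eq (p : P) (σ : Word P) : rV (.atom p) σ = ttop ∨ rV (.atom p) σ = tbot := by
  unfold rV
  split_ifs
  exacts [.inl rfl, .inr rfl]

theorem tvMono_rV : ∀ (φ : RFormula P) (σ : Word P), TVMono (rV φ σ)
  | .atom p, σ => by
    rcases rV_atom_eq p σ with h | h <;> rw [h]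
    exacts [tvMono_ttop, tvMono_tbot]
  | .not _, _ => tvMono_tneg _
  | .and a b, σ => tvMono_tmeet (tvMono_rV a σ) (tvMono_rV b σ)
  | .or a b, σ => tvMono_tjoin (tvMono_rV a σ) (tvMono_rV b σ)
  | .imp _ b, σ => tvMono_timp _ (tvMono_rV b σ)
  | .next a, σ => tvMono_rV a (suffix σ 1)
  | .always a, σ => by
    rw [rV_always]
    exact tvMono_robustRelease (fun _ => tvMono_tbot) (tvMono_rV a) σ
  | .eventually a, σ => by
    rw [rV_eventually]
    exact tvMono_robustUntil (fun _ => tvMono_ttop) (tvMono_rV a) σ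
  | .release a b, σ => tvMono_robustRelease (tvMono_rV a) (tvMono_rV b) σ
  | .until a b, σ => tvMono_robustUntil (tvMono_rV a) (tvMono_rV b) σ

/-! ### Codes of words and fair chains -/

/-- What a state of the automaton records about a subformula: the packed label for the robust
always and release, and the value otherwise. -/
noncomputable def code : RFormula P → Word P → TV
  | .always a => releaseCode (fun _ => tbot) (rV a)
  | .release a b => releaseCode (rV a) (rV b)
  | φ => rV φ

theorem tvMono_code (φ : RFormula P) (σ : Word P) : TVMono (code φ σ) := by
  cases φ
  case always a => exact (isChain_releaseLabel (fun _ => tvMono_tbot) (tvMono_rV a) σ).tvMono_encode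
  case release a b => exact (isChain_releaseLabel (tvMono_rV a) (tvMono_rV b) σ).tvMono_encode
  all_goals exact tvMono_rV _ σ

/-- The `k`-th Büchi condition attached to a formula, vacuous unless its main connective is one of
the robust always, eventually, release and until. -/
def Fair : RFormula P → Fin 4 → Word P → Prop
  | .always a, k, σ => ReleaseFair k tbot (rV a σ) (releaseLabel (fun _ => tbot) (rV a) σ)
  | .eventually a, k, σ => UntilFair k (rV a σ) (robustUntil (fun _ => ttop) (rV a) σ)
  | .release a b, k, σ => ReleaseFair k (rV a σ) (rV b σ) (releaseLabel (rV a) (rV b) σ)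
  | .until a b, k, σ => UntilFair k (rV b σ) (robustUntil (rV a) (rV b) σ)
  | _, _, _ => True

theorem frequently_fair (φ : RFormula P) (k : Fin 4) (σ : Word P) :
    ∃ᶠ i in atTop, Fair φ k (suffix σ i) :=
  match φ with
  | .always a => frequently_releaseFair k (fun _ => tbot) (rV a) σ
  | .eventually a => frequently_untilFair k (fun _ => ttop) (rV a) σ
  | .release a b => frequently_releaseFair k (rV a) (rV b) σ
  | .until a b => frequently_untilFair k (rV a) (rV b) σ
  | .atom _ | .not _ | .and _ _ | .or _ _ | .imp _ _ | .next _ => .of_forall fun _ => trivial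

variable [DecidableEq P]

theorem self_mem_cl (φ : RFormula P) : φ ∈ cl φ := by
  cases φ <;> simp [cl]

theorem cl_subset_cl {φ ψ : RFormula P} (h : ψ ∈ cl φ) : cl ψ ⊆ cl φ := by
  induction φ <;> simp only [cl, Finset.mem_insert, Finset.mem_union, Finset.mem_singleton] at h <;>
    grind [cl]

/-- Two words are equivalent if they have the same codes for all subformulas of `φ`. -/
def CodeEquiv (φ : RFormula P) (σ τ : Word P) : Prop :=
  ∀ ψ ∈ cl φ, code ψ σ = code ψ τ

namespace CodeEquiv

variable {φ ψ a b : RFormula P} {σ τ : Word P}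

theorem of_mem (h : CodeEquiv φ σ τ) (hψ : ψ ∈ cl φ) : CodeEquiv ψ σ τ :=
  fun χ hχ => h χ (cl_subset_cl hψ hχ)

theorem rV_eq (h : CodeEquiv φ σ τ) : rV φ σ = rV φ τ := by
  induction φ
  case always a ih =>
    rw [rV_always, rV_always]
    exact congrArg ReleaseLabel.value <| releaseLabel_eq_of_releaseCode_eq (fun _ => tvMono_tbot)
      (tvMono_rV a) (h _ (self_mem_cl _)) (ih (h.of_mem (by simp [cl, self_mem_cl])))
  case release a b _ ihb =>
    rw [rV_release, rV_release]
    exact congrArg ReleaseLabel.value <| releaseLabel_eq_of_releaseCode_eq (tvMono_rV a)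
      (tvMono_rV b) (h _ (self_mem_cl _)) (ihb (h.of_mem (by simp [cl, self_mem_cl])))
  all_goals exact h _ (self_mem_cl _)

theorem releaseLabel_eq_of_always (h : CodeEquiv (.always a) σ τ) :
    releaseLabel (fun _ => tbot) (rV a) σ = releaseLabel (fun _ => tbot) (rV a) τ :=
  releaseLabel_eq_of_releaseCode_eq (fun _ => tvMono_tbot) (tvMono_rV a) (h _ (self_mem_cl _))
    (h.of_mem (by simp [cl, self_mem_cl])).rV_eq

theorem releaseLabel_eq_of_release (h : CodeEquiv (.release a b) σ τ) :
    releaseLabel (rV a) (rV b) σ = releaseLabel (rV a) (rV b) τ :=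
  releaseLabel_eq_of_releaseCode_eq (tvMono_rV a) (tvMono_rV b) (h _ (self_mem_cl _))
    (h.of_mem (by simp [cl, self_mem_cl])).rV_eq

theorem fair_iff (h : CodeEquiv φ σ τ) (k : Fin 4) : Fair φ k σ ↔ Fair φ k τ := by
  have hsub {ψ : RFormula P} (hψ : ψ ∈ cl φ) : rV ψ σ = rV ψ τ := (h.of_mem hψ).rV_eq
  match φ with
  | .always a =>
    rw [Fair, Fair, h.releaseLabel_eq_of_always, hsub (ψ := a) (by simp [cl, self_mem_cl])]
  | .eventually a =>
    rw [Fair, Fair, ← rV_eventually, ← rV_eventually, h.rV_eq,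
      hsub (ψ := a) (by simp [cl, self_mem_cl])]
  | .release a b =>
    rw [Fair, Fair, h.releaseLabel_eq_of_release, hsub (ψ := a) (by simp [cl, self_mem_cl]),
      hsub (ψ := b) (by simp [cl, self_mem_cl])]
  | .until a b =>
    rw [Fair, Fair, ← rV_until, ← rV_until, h.rV_eq, hsub (ψ := b) (by simp [cl, self_mem_cl])]
  | .atom _ | .not _ | .and _ _ | .or _ _ | .imp _ _ | .next _ => rfl

end CodeEquiv

/-- A sequence of words in which each word has the codes of the tail of its predecessor, and which
meets the Büchi conditions of all subformulas of `φ` infinitely often: this is what an accepting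
run of the automaton provides. -/
structure FairChain (φ : RFormula P) (τ : ℕ → Word P) : Prop where
  step : ∀ i, CodeEquiv φ (suffix (τ i) 1) (τ (i + 1))
  fair : ∀ ψ ∈ cl φ, ∀ k, ∃ᶠ i in atTop, Fair ψ k (τ i)

theorem fairChain_suffix (φ : RFormula P) (σ : Word P) : FairChain φ (fun i => suffix σ i) where
  step i ψ _ := by rw [suffix_suffix]
  fair ψ _ k := frequently_fair ψ k σ

namespace FairChain

variable {φ ψ a b : RFormula P} {τ υ : ℕ → Word P}

theorem of_mem (h : FairChain φ τ) (hψ : ψ ∈ cl φ) : FairChain ψ τ where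
  step i := (h.step i).of_mem hψ
  fair χ hχ := h.fair χ (cl_subset_cl hψ hχ)

theorem isFairRelease_always (h : FairChain (.always a) τ) :
    IsFairRelease (fun _ => tbot) (fun i => rV a (τ i))
      (fun i => releaseLabel (fun _ => tbot) (rV a) (τ i)) :=
  isFairRelease_releaseLabel (fun i => (h.step i).releaseLabel_eq_of_always)
    (h.fair _ (self_mem_cl _))

theorem isFairRelease_release (h : FairChain (.release a b) τ) :
    IsFairRelease (fun i => rV a (τ i)) (fun i => rV b (τ i))
      (fun i => releaseLabel (rV a) (rV b) (τ i)) :=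
  isFairRelease_releaseLabel (fun i => (h.step i).releaseLabel_eq_of_release)
    (h.fair _ (self_mem_cl _))

theorem isFairUntil_eventually (h : FairChain (.eventually a) τ) :
    IsFairUntil (fun _ => ttop) (fun i => rV a (τ i))
      (fun i => robustUntil (fun _ => ttop) (rV a) (τ i)) :=
  isFairUntil_robustUntil (fun i => by simpa only [rV_eventually] using (h.step i).rV_eq)
    (h.fair _ (self_mem_cl _))

theorem isFairUntil_until (h : FairChain (.until a b) τ) :
    IsFairUntil (fun i => rV a (τ i)) (fun i => rV b (τ i))
      (fun i => robustUntil (rV a) (rV b) (τ i)) :=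
  isFairUntil_robustUntil (fun i => (h.step i).rV_eq) (h.fair _ (self_mem_cl _))

theorem rV_eq_of_subset (hτ : FairChain φ τ) (hυ : FairChain φ υ) (h0 : ∀ i, τ i 0 = υ i 0)
    (hψ : cl ψ ⊆ cl φ) (i : ℕ) : rV ψ (τ i) = rV ψ (υ i) := by
  induction ψ generalizing i <;>
    simp only [cl, Finset.insert_subset_iff, Finset.union_subset_iff] at hψ
  case atom => rw [rV, rV, h0 i]
  case not iha => exact congrArg tneg (iha hψ.2 i)
  case and iha ihb => exact congrArg₂ tmeet (iha hψ.2.1 i) (ihb hψ.2.2 i)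
  case or iha ihb => exact congrArg₂ tjoin (iha hψ.2.1 i) (ihb hψ.2.2 i)
  case imp iha ihb => exact congrArg₂ timp (iha hψ.2.1 i) (ihb hψ.2.2 i)
  case next a iha =>
    have ha : a ∈ cl φ := hψ.2 (self_mem_cl a)
    calc rV a (suffix (τ i) 1) = rV a (τ (i + 1)) := ((hτ.step i).of_mem ha).rV_eq
      _ = rV a (υ (i + 1)) := iha hψ.2 (i + 1)
      _ = rV a (suffix (υ i) 1) := ((hυ.step i).of_mem ha).rV_eq.symm
  case always iha =>
    have hυψ := (hυ.of_mem hψ.1).isFairRelease_always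
    simp only [← iha hψ.2] at hυψ
    rw [rV_always, rV_always]
    exact (hτ.of_mem hψ.1).isFairRelease_always.value_unique hυψ i
  case eventually iha =>
    have hυψ := (hυ.of_mem hψ.1).isFairUntil_eventually
    simp only [← iha hψ.2] at hυψ
    rw [rV_eventually, rV_eventually]
    exact (hτ.of_mem hψ.1).isFairUntil_eventually.unique hυψ i
  case release iha ihb =>
    have hυψ := (hυ.of_mem hψ.1).isFairRelease_release
    simp only [← iha hψ.2.1, ← ihb hψ.2.2] at hυψ
    rw [rV_release, rV_release]
    exact (hτ.of_mem hψ.1).isFairRelease_release.value_unique hυψ i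
  -- `until` cannot be named here, being a keyword
  case _ iha ihb =>
    have hυψ := (hυ.of_mem hψ.1).isFairUntil_until
    simp only [← iha hψ.2.1, ← ihb hψ.2.2] at hυψ
    rw [rV_until, rV_until]
    exact (hτ.of_mem hψ.1).isFairUntil_until.unique hυψ i

end FairChain

/-! ### The automaton -/

/-- The codes of a word for all subformulas of `φ`. -/
noncomputable def codes (φ : RFormula P) (σ : Word P) (ψ : cl φ) : RobustTV :=
  ⟨code ψ σ, tvMono_code ψ σ⟩

theorem codes_eq_iff {φ : RFormula P} {σ τ : Word P} :
    codes φ σ = codes φ τ ↔ CodeEquiv φ σ τ := by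
  simp [codes, CodeEquiv, funext_iff]

/-- The states of the automaton: the realized families of codes, followed by one initial state for
each truth value. -/
abbrev AutState (φ : RFormula P) : Type :=
  Set.range (codes φ) ⊕ RobustTV

namespace AutState

variable {φ : RFormula P}

/-- A state represents the words with its codes, an initial state those with its truth value. -/
def Represents : AutState φ → Word P → Prop
  | .inl c, τ => codes φ τ = c
  | .inr b, τ => rV φ τ = b

/-- The state given by the codes of a word. -/
noncomputable def ofWord (φ : RFormula P) (σ : Word P) : AutState φ :=
  .inl ⟨codes φ σ, σ, rfl⟩

theorem represents_ofWord {σ τ : Word P} : (ofWord φ σ).Represents τ ↔ CodeEquiv φ σ τ := by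
  rw [← codes_eq_iff, eq_comm]
  rfl

end AutState

open Classical in
/-- The automaton of `φ`: a transition leads from a state representing a word to the state of its
tail, reading the first letter, and there is one acceptance set for each subformula and each
component. -/
noncomputable def aut (φ : RFormula P) : GBA (Set P) (AutState φ) where
  Δ s a s' := ∃ τ, s.Represents τ ∧ τ 0 = a ∧ s' = .ofWord φ (suffix τ 1)
  Acc := (cl φ ×ˢ Finset.univ).image fun p : RFormula P × Fin 4 =>
    {s | ∃ τ, s = .ofWord φ τ ∧ Fair p.1 p.2 τ}

theorem forall_mem_acc_aut {φ : RFormula P} {p : Set (AutState φ) → Prop} :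
    (∀ F ∈ (aut φ).Acc, p F) ↔
      ∀ ψ ∈ cl φ, ∀ k, p {s | ∃ τ, s = .ofWord φ τ ∧ Fair ψ k τ} := by
  simp only [aut, Finset.forall_mem_image, Prod.forall, Finset.mem_product,
    Finset.mem_univ, and_true]
  exact forall_congr' fun _ => forall_comm

theorem card_acc_aut_le (φ : RFormula P) : (aut φ).Acc.card ≤ 4 * (cl φ).card :=
  Finset.card_image_le.trans_eq <| by
    rw [Finset.card_product, Finset.card_univ, Fintype.card_fin, mul_comm]

theorem acceptsFrom_aut_of_rV_eq {φ : RFormula P} {b : RobustTV} {σ : Word P} (h : rV φ σ = b) :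
    AcceptsFrom (aut φ) (.inr b) σ := by
  refine ⟨fun | 0 => .inr b | i + 1 => .ofWord φ (suffix σ (i + 1)), rfl, fun i => ?_,
    forall_mem_acc_aut.2 fun ψ _ k i => ?_⟩
  · refine ⟨suffix σ i, ?_, rfl, by rw [suffix_suffix]⟩
    cases i with
    | zero => rwa [suffix_zero]
    | succ i => rfl
  · obtain ⟨j, hij, hj⟩ := frequently_atTop.1 (frequently_fair ψ k σ) (i + 1)
    obtain ⟨j, rfl⟩ := Nat.exists_eq_add_of_le' (Nat.one_le_of_lt hij)
    exact ⟨j + 1, by omega, _, rfl, hj⟩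

theorem exists_fairChain_of_acceptsFrom {φ : RFormula P} {b : RobustTV} {σ : Word P}
    (h : AcceptsFrom (aut φ) (.inr b) σ) :
    ∃ τ, FairChain φ τ ∧ (∀ i, τ i 0 = σ i) ∧ rV φ (τ 0) = b := by
  obtain ⟨ρ, hρ0, hρ, hacc⟩ := h
  choose τ hτ hτσ hτρ using hρ
  have hstep (i : ℕ) : CodeEquiv φ (suffix (τ i) 1) (τ (i + 1)) :=
    AutState.represents_ofWord.1 (hτρ i ▸ hτ (i + 1))
  refine ⟨τ, ⟨hstep, fun ψ hψ k => frequently_atTop.2 fun i => ?_⟩, hτσ, ?_⟩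
  · obtain ⟨j, hij, υ, hυ, hfair⟩ := forall_mem_acc_aut.1 hacc ψ hψ k i
    have hυτ : CodeEquiv φ υ (τ j) := AutState.represents_ofWord.1 (hυ ▸ hτ j)
    exact ⟨j, hij, ((hυτ.of_mem hψ).fair_iff k).1 hfair⟩
  · have := hτ 0
    rwa [hρ0] at this

theorem acceptsFrom_aut_iff {φ : RFormula P} {b : RobustTV} {σ : Word P} :
    AcceptsFrom (aut φ) (.inr b) σ ↔ rV φ σ = b := by
  refine ⟨fun h => ?_, acceptsFrom_aut_of_rV_eq⟩
  obtain ⟨τ, hτ, hτσ, hb⟩ := exists_fairChain_of_acceptsFrom h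
  have hσ := hτ.rV_eq_of_subset (fairChain_suffix φ σ) hτσ subset_rfl 0
  rw [← hb, hσ, suffix_zero]

theorem exists_atom_mem_cl (φ : RFormula P) : ∃ p, .atom p ∈ cl φ := by
  induction φ <;> grind [cl]

theorem card_range_codes_lt (φ : RFormula P) :
    Nat.card (Set.range (codes φ)) < 5 ^ (cl φ).card := by
  obtain ⟨p, hp⟩ := exists_atom_mem_cl φ
  have hatom : (fun _ => ⟨(false, false, false, true), by decide⟩) ∉ Set.range (codes φ) := by
    rintro ⟨σ, hσ⟩
    have hv : rV (.atom p) σ = (false, false, false, true) :=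
      congrArg Subtype.val (congrFun hσ ⟨.atom p, hp⟩)
    rcases rV_atom_eq p σ with h | h <;> simp [h, ttop, tbot] at hv
  calc Nat.card (Set.range (codes φ)) < Nat.card (cl φ → RobustTV) :=
        Set.ncard_lt_card (Set.ne_univ_iff_exists_notMem _ |>.2 ⟨_, hatom⟩)
    _ = 5 ^ (cl φ).card := by simp [card_robustTV]

theorem card_autState_le (φ : RFormula P) : Nat.card (AutState φ) ≤ 5 ^ (cl φ).card + 4 := by
  have := card_range_codes_lt φ
  rw [Nat.card_sum, Nat.card_eq_fintype_card (α := RobustTV), card_robustTV]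
  omega

end RLTL

theorem exists_GBA_for_full_rLTL_general {P : Type} [DecidableEq P] (φ : RFormula P) :
    ∃ (n : ℕ) (A : GBA (Set P) (Fin n)) (q : {b : TV // TVMono b} → Fin n),
      0 < n
      ∧ n ≤ 5 ^ (cl φ).card + 4
      ∧ A.Acc.card ≤ 4 * (cl φ).card
      ∧ ∀ (b : {b : TV // TVMono b}) (σ : ℕ → Set P),
          AcceptsFrom A (q b) σ ↔ rV φ σ = b.val := by
  let e := Finite.equivFin (RLTL.AutState φ)
  refine ⟨_, (RLTL.aut φ).map e, fun b => e (.inr b), ?_, RLTL.card_autState_le φ, ?_, ?_⟩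
  · exact Nat.card_pos_iff.2 ⟨⟨.inr ⟨ttop, RLTL.tvMono_ttop⟩⟩, inferInstance⟩
  · exact (Finset.card_map _).trans_le (RLTL.card_acc_aut_le φ)
  · intro b σ
    rw [GBA.acceptsFrom_map, RLTL.acceptsFrom_aut_iff]

/-- For every full rLTL formula `φ` over a nonempty finite set `𝒫` of atomic
propositions there is a generalized Büchi automaton over `Σ = 2^𝒫`, with at most
`5^|cl(φ)| + 4` states and at most `4·|cl(φ)|` acceptance sets, together with a family of
states `(q_b)_{b ∈ B₄}`, such that for every `b ∈ B₄` and every `σ ∈ Σ^ω` the automaton has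
an accepting run on `σ` starting in `q_b` if and only if `V(σ,φ) = b`. -/
theorem exists_GBA_for_full_rLTL {P : Type} [Fintype P] [Nonempty P] [DecidableEq P]
    (φ : RFormula P) :
    ∃ (n : ℕ) (A : GBA (Set P) (Fin n)) (q : {b : TV // TVMono b} → Fin n),
      0 < n
      ∧ n ≤ 5 ^ (cl φ).card + 4
      ∧ A.Acc.card ≤ 4 * (cl φ).card
      ∧ ∀ (b : {b : TV // TVMono b}) (σ : ℕ → Set P),
          AcceptsFrom A (q b) σ ↔ rV φ σ = b.val := by
  exact exists_GBA_for_full_rLTL_general φ
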